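/- arXiv:2005.01806 — 2 statements merged into one kernel-verified Lean document; each statement's English description precedes it below -/
import Mathlib

section
/- Let a < b be real numbers and let g : [a,b] → ℂ be of bounded variation on [a,b], left-continuous at every point of the open interval (a,b), and satisfy g(a) = 0. Then there exists a sequence (g_k)_{k≥1} of functions belonging to S (the complex linear span of the indicator functions of the half-open intervals (c,b] with a ≤ c ≤ b and of the singleton {b}) such that sup_{t ∈ [a,b]} |g_k(t) − g(t)| → 0 as k → ∞ and sup_{k≥1} V(g_k, [a,b]) < ∞, where V(h,[a,b]) denotes the total variation of h on [a,b]. -/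
/-!
Let `v t` be the total variation of `g` on `[a, t]`. It is monotone, it dominates the increments
of `g`, and it is left-continuous where `g` is, so each set `{t ∈ [a, b] | r < v t}` with `0 ≤ r`
is some `(c, b]` or `{b}`.

Given `ε > 0`, cut `[a, b]` into the finitely many level sets of `m t = ⌈v t / ε⌉₊`, choose one
point in each of them, and let `φ t` be the point chosen in the level set of `t`. Then `g ∘ φ` is
within `ε` of `g`, and its variation is at most that of `g` because `φ` is monotone. By telescoping,
`g ∘ φ` is a combination of indicators of the sets `{j < m} = {j * ε < v}`; there is no constant
term because `g` vanishes where `v` does.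
-/

open Filter Set

/-- Membership in `S`, the complex linear span of the indicator functions of the
half-open intervals `(c, b]` with `a ≤ c ≤ b` and of the singleton `{b}`,
regarded as functions `ℝ → ℂ`. -/
def MemSpanS (a b : ℝ) (f : ℝ → ℂ) : Prop :=
  f ∈ Submodule.span ℂ
    ({h : ℝ → ℂ | ∃ c ∈ Set.Icc a b, h = Set.indicator (Set.Ioc c b) (fun _ => (1 : ℂ))} ∪
      {Set.indicator {b} (fun _ => (1 : ℂ))})

section VariationLevel

variable {α E : Type*} [LinearOrder α] [PseudoMetricSpace E] {f : α → E} {s : Set α}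
  {a x y : α} {ε : ℝ}

lemma dist_le_variationOnFromTo_sub (hf : LocallyBoundedVariationOn f s) (ha : a ∈ s) (hx : x ∈ s)
    (hy : y ∈ s) (hxy : x ≤ y) :
    dist (f x) (f y) ≤ variationOnFromTo f s a y - variationOnFromTo f s a x := by
  rw [variationOnFromTo.sub_right hf ha hy hx, variationOnFromTo.eq_of_le f s hxy]
  exact (hf x y hx hy).dist_le ⟨hx, left_mem_Icc.2 hxy⟩ ⟨hy, right_mem_Icc.2 hxy⟩

lemma continuousWithinAt_variationOnFromTo_Iio [TopologicalSpace α] [OrderTopology α]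
    (hf : LocallyBoundedVariationOn f s) (ha : a ∈ s) (hx : x ∈ s)
    (hfx : ContinuousWithinAt f (s ∩ Iio x) x) :
    ContinuousWithinAt (variationOnFromTo f s a) (s ∩ Iio x) x := by
  simpa only [ContinuousWithinAt, dist_self, sub_zero] using
    variationOnFromTo.tendsto_left ha hx hf hfx

/-- The index of the mesh interval `((j - 1) * ε, j * ε]` containing the variation of `f` on `s`
from `a` to `t`. Rounding up makes the sets `{t | j < variationLevel f s a ε t}` strict superlevel
sets of the variation, as left-continuity requires. Nonpositive variations get index `0`. -/
noncomputable def variationLevel (f : α → E) (s : Set α) (a : α) (ε : ℝ) (t : α) : ℕ :=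
  ⌈variationOnFromTo f s a t / ε⌉₊

lemma lt_variationLevel_iff (hε : 0 < ε) {j : ℕ} :
    j < variationLevel f s a ε x ↔ j * ε < variationOnFromTo f s a x := by
  rw [variationLevel, Nat.lt_ceil, lt_div_iff₀ hε]

lemma variationLevel_self : variationLevel f s a ε a = 0 := by
  rw [variationLevel, variationOnFromTo.self, zero_div, Nat.ceil_zero]

lemma monotoneOn_variationLevel (hf : LocallyBoundedVariationOn f s) (ha : a ∈ s) (hε : 0 ≤ ε) :
    MonotoneOn (variationLevel f s a ε) s := fun _ hx _ hy hxy =>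
  Nat.ceil_mono (div_le_div_of_nonneg_right (variationOnFromTo.monotoneOn hf ha hx hy hxy) hε)

lemma dist_lt_of_variationLevel_eq (hf : LocallyBoundedVariationOn f s) (ha : IsLeast s a)
    (hε : 0 < ε) (hx : x ∈ s) (hy : y ∈ s)
    (hxy : variationLevel f s a ε x = variationLevel f s a ε y) : dist (f x) (f y) < ε := by
  wlog hle : x ≤ y generalizing x y
  · rw [dist_comm]
    exact this hy hx hxy.symm (le_of_not_ge hle)
  have hnonneg : 0 ≤ variationOnFromTo f s a x / ε :=
    div_nonneg (variationOnFromTo.nonneg_of_le f s (ha.2 hx)) hε.le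
  have hlevel : variationOnFromTo f s a y / ε < variationOnFromTo f s a x / ε + 1 :=
    calc variationOnFromTo f s a y / ε ≤ variationLevel f s a ε y := Nat.le_ceil _
      _ = variationLevel f s a ε x := by rw [hxy]
      _ < variationOnFromTo f s a x / ε + 1 := Nat.ceil_lt_add_one hnonneg
  rw [div_add_one hε.ne', div_lt_div_iff_of_pos_right hε] at hlevel
  linarith [dist_le_variationOnFromTo_sub hf ha.1 hx hy hle]

lemma dist_eq_zero_of_variationLevel_eq_zero (hf : LocallyBoundedVariationOn f s)
    (ha : IsLeast s a) (hε : 0 < ε) (hx : x ∈ s) (h : variationLevel f s a ε x = 0) :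
    dist (f a) (f x) = 0 := by
  have hle : variationOnFromTo f s a x ≤ 0 := by
    have hnot : ¬ ((0 : ℕ) : ℝ) * ε < variationOnFromTo f s a x :=
      (lt_variationLevel_iff hε).not.1 h.le.not_gt
    simpa only [Nat.cast_zero, zero_mul, not_lt] using hnot
  have hzero := hle.antisymm (variationOnFromTo.nonneg_of_le f s (ha.2 hx))
  rw [dist_edist, variationOnFromTo.edist_zero_of_eq_zero hf ha.1 hx hzero, ENNReal.toReal_zero]

end VariationLevel

section Superlevel

variable {α β : Type*} [ConditionallyCompleteLinearOrder α] [TopologicalSpace α] [OrderTopology α]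
  [LinearOrder β] [TopologicalSpace β] [ClosedIicTopology β] {v : α → β} {a b : α} {r : β}

lemma exists_superlevel_eq_Ioc_or_eq_singleton (hab : a ≤ b) (hv : MonotoneOn v (Icc a b))
    (hleft : ∀ t ∈ Ioo a b, ContinuousWithinAt v (Ico a t) t) (ha : v a ≤ r) :
    (∃ c ∈ Icc a b, {t ∈ Icc a b | r < v t} = Ioc c b) ∨ {t ∈ Icc a b | r < v t} = {b} := by
  set A : Set α := {t ∈ Icc a b | v t ≤ r}
  have haA : a ∈ A := ⟨left_mem_Icc.2 hab, ha⟩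
  obtain ⟨c, hc⟩ : ∃ c, IsLUB A c := ⟨_, isLUB_csSup ⟨a, haA⟩ ⟨b, fun t ht => ht.1.2⟩⟩
  have hcab : c ∈ Icc a b := ⟨hc.1 haA, hc.2 fun t ht => ht.1.2⟩
  have hbelow : ∀ t ∈ Icc a b, t < c → v t ≤ r := fun t ht htc =>
    have ⟨u, hu, htu, _⟩ := hc.exists_between htc
    (hv ht hu.1 htu.le).trans hu.2
  have habove : ∀ t ∈ Icc a b, c < t → r < v t := fun t ht hct =>
    lt_of_not_ge fun h => (hc.1 ⟨ht, h⟩).not_gt hct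
  by_cases hvc : v c ≤ r
  · refine .inl ⟨c, hcab, Set.ext fun t => ⟨fun ⟨ht, hrt⟩ => ⟨?_, ht.2⟩, fun ht => ?_⟩⟩
    · exact lt_of_not_ge fun htc => ((hv ht hcab htc).trans hvc).not_gt hrt
    · have htab : t ∈ Icc a b := ⟨hcab.1.trans ht.1.le, ht.2⟩
      exact ⟨htab, habove t htab ht.1⟩
  · have hAc : A ⊆ Ico a c := fun t ht =>
      ⟨ht.1.1, (hc.1 ht).lt_of_ne fun h => hvc (h ▸ ht.2)⟩
    have hcb : c = b := by
      by_contra hne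
      have : (nhdsWithin c A).NeBot := hc.nhdsWithin_neBot ⟨a, haA⟩
      have hlim := (hleft c ⟨(hAc haA).2, hcab.2.lt_of_ne hne⟩).mono hAc
      exact hvc (le_of_tendsto hlim (eventually_mem_nhdsWithin.mono fun t ht => ht.2))
    subst hcb
    refine .inr (Set.ext fun t => ⟨fun ⟨ht, hrt⟩ => ?_, ?_⟩)
    · exact ht.2.eq_of_not_lt fun htc => (hbelow t ht htc).not_gt hrt
    · rintro rfl
      exact ⟨hcab, lt_of_not_ge hvc⟩

end Superlevel

lemma sum_range_indicator_lt {α E : Type*} [AddCommGroup E] {s : Set α} {m : α → ℕ} {N : ℕ} {t : α}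
    (F : ℕ → E) (ht : t ∈ s) (htN : m t ≤ N) :
    ∑ j ∈ Finset.range N, {x ∈ s | j < m x}.indicator (fun _ => F (j + 1) - F j) t =
      F (m t) - F 0 := by
  classical
  have hfilter : (Finset.range N).filter (· < m t) = Finset.range (m t) := by
    ext j
    simp only [Finset.mem_filter, Finset.mem_range]
    lia
  simp only [indicator_apply, mem_ofPred_eq, ht, true_and]
  rw [← Finset.sum_filter, hfilter, Finset.sum_range_sub]

section LeftStep

/-- The analogue of the span `S` for functions on an ordered type with values in a group `E`: the
sums of functions that are constant on some `(c, b]`, `c ∈ [a, b]`, or on `{b}`, and zero elsewhere.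
The values of these constants range over all of `E`, which takes the place of scalars. -/
def leftStepFunctions {α : Type*} (E : Type*) [LinearOrder α] [AddCommGroup E] (a b : α) :
    AddSubgroup (α → E) :=
  AddSubgroup.closure {h | ∃ x : E,
    (∃ c ∈ Icc a b, h = (Ioc c b).indicator fun _ => x) ∨ h = ({b} : Set α).indicator fun _ => x}

lemma memSpanS_of_mem_leftStepFunctions {a b : ℝ} {h : ℝ → ℂ}
    (hh : h ∈ leftStepFunctions ℂ a b) : MemSpanS a b h := by
  have indicator_const (s : Set ℝ) (x : ℂ) :
      (s.indicator fun _ => x) = x • s.indicator fun _ => (1 : ℂ) := by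
    ext t
    by_cases ht : t ∈ s <;> simp [ht]
  rw [MemSpanS, ← Submodule.mem_toAddSubgroup]
  refine (AddSubgroup.closure_le _).2 ?_ hh
  rintro _ ⟨x, ⟨c, hc, rfl⟩ | rfl⟩ <;>
    refine indicator_const _ x ▸ Submodule.smul_mem _ x (Submodule.subset_span ?_)
  · exact .inl ⟨c, hc, rfl⟩
  · exact .inr rfl

lemma exists_mem_leftStepFunctions_eqOn_comp {α E : Type*} [LinearOrder α] [AddCommGroup E]
    {a b : α} {m : α → ℕ} {F : ℕ → E} (hm : BddAbove (m '' Icc a b))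
    (hlevel : ∀ j, (∃ c ∈ Icc a b, {t ∈ Icc a b | j < m t} = Ioc c b) ∨
      {t ∈ Icc a b | j < m t} = {b})
    (hF : F 0 = 0) :
    ∃ h ∈ leftStepFunctions E a b, EqOn h (F ∘ m) (Icc a b) := by
  obtain ⟨N, hN⟩ := hm
  refine ⟨∑ j ∈ Finset.range N, {t ∈ Icc a b | j < m t}.indicator fun _ => F (j + 1) - F j,
    sum_mem fun j _ => AddSubgroup.subset_closure ⟨F (j + 1) - F j, ?_⟩, fun t ht => ?_⟩
  · rcases hlevel j with ⟨c, hc, hset⟩ | hset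
    · exact .inl ⟨c, hc, by rw [hset]⟩
    · exact .inr (by rw [hset])
  · rw [Finset.sum_apply, sum_range_indicator_lt F ht (hN (mem_image_of_mem m ht)), hF, sub_zero,
      Function.comp_apply]

variable {α E : Type*} [ConditionallyCompleteLinearOrder α] [TopologicalSpace α] [OrderTopology α]
  [NormedAddCommGroup E] {a b : α} {g : α → E}

lemma exists_superlevel_variationLevel_eq (hab : a ≤ b)
    (hg : LocallyBoundedVariationOn g (Icc a b))
    (hleft : ∀ t ∈ Ioo a b, ContinuousWithinAt g (Ico a t) t) {ε : ℝ} (hε : 0 < ε) (j : ℕ) :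
    (∃ c ∈ Icc a b, {t ∈ Icc a b | j < variationLevel g (Icc a b) a ε t} = Ioc c b) ∨
      {t ∈ Icc a b | j < variationLevel g (Icc a b) a ε t} = {b} := by
  have ha : a ∈ Icc a b := left_mem_Icc.2 hab
  simp only [lt_variationLevel_iff hε]
  refine exists_superlevel_eq_Ioc_or_eq_singleton hab (variationOnFromTo.monotoneOn hg ha)
    (fun t ht => ?_) ?_
  · have hIco : Icc a b ∩ Iio t = Ico a t := by grind
    exact hIco ▸ continuousWithinAt_variationOnFromTo_Iio hg ha (Ioo_subset_Icc_self ht)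
      (hIco ▸ hleft t ht)
  · rw [variationOnFromTo.self]
    positivity

lemma exists_mem_leftStepFunctions_dist_lt (hab : a ≤ b)
    (hg : LocallyBoundedVariationOn g (Icc a b))
    (hleft : ∀ t ∈ Ioo a b, ContinuousWithinAt g (Ico a t) t) (hga : g a = 0)
    {ε : ℝ} (hε : 0 < ε) :
    ∃ h ∈ leftStepFunctions E a b, (∀ t ∈ Icc a b, dist (g t) (h t) < ε) ∧
      eVariationOn h (Icc a b) ≤ eVariationOn g (Icc a b) := by
  have ha : IsLeast (Icc a b) a := isLeast_Icc hab
  set m : α → ℕ := variationLevel g (Icc a b) a ε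
  have : Nonempty α := ⟨a⟩
  set rep : ℕ → α := Function.invFunOn m (Icc a b)
  have hm : MonotoneOn m (Icc a b) := monotoneOn_variationLevel hg ha.1 hε.le
  have hrep_mem : MapsTo rep (m '' Icc a b) (Icc a b) := fun _ => Function.invFunOn_mem
  have hrep_inv : RightInvOn rep m (m '' Icc a b) := fun _ => Function.invFunOn_eq
  have hrep_mono : MonotoneOn (rep ∘ m) (Icc a b) :=
    (Function.monotoneOn_of_rightInvOn_of_mapsTo hm hrep_inv hrep_mem).comp hm (mapsTo_image m _)
  have hzero : (0 : ℕ) ∈ m '' Icc a b := ⟨a, ha.1, variationLevel_self⟩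
  have hg_rep_zero : g (rep 0) = 0 := hga ▸ (dist_eq_zero.1 <|
    dist_eq_zero_of_variationLevel_eq_zero hg ha hε (hrep_mem hzero) (hrep_inv hzero)).symm
  obtain ⟨h, hh, heq⟩ := exists_mem_leftStepFunctions_eqOn_comp (F := g ∘ rep)
    (hm.map_bddAbove subset_rfl ⟨b, fun t ht => ht.2, right_mem_Icc.2 hab⟩)
    (exists_superlevel_variationLevel_eq hab hg hleft hε) hg_rep_zero
  refine ⟨h, hh, fun t ht => ?_, ?_⟩
  · have hmt : m t ∈ m '' Icc a b := mem_image_of_mem m ht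
    rw [heq ht]
    exact dist_lt_of_variationLevel_eq hg ha hε ht (hrep_mem hmt) (hrep_inv hmt).symm
  · rw [eVariationOn.congr heq, Function.comp_assoc]
    exact eVariationOn.comp_le_of_monotoneOn g _ hrep_mono
      (hrep_mem.comp (mapsTo_image m _))

theorem stmt_0_general (hab : a ≤ b) (hg : BoundedVariationOn g (Icc a b))
    (hleft : ∀ t ∈ Ioo a b, ContinuousWithinAt g (Ico a t) t) (hga : g a = 0) :
    ∃ G : ℕ → α → E, (∀ k, G k ∈ leftStepFunctions E a b) ∧
      TendstoUniformlyOn G g atTop (Icc a b) ∧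
      ∀ k, eVariationOn (G k) (Icc a b) ≤ eVariationOn g (Icc a b) := by
  choose G hG hdist hvar using fun k : ℕ => exists_mem_leftStepFunctions_dist_lt hab
    hg.locallyBoundedVariationOn hleft hga (Nat.one_div_pos_of_nat (α := ℝ) (n := k))
  refine ⟨G, hG, Metric.tendstoUniformlyOn_iff.2 fun ε hε => ?_, hvar⟩
  filter_upwards [tendsto_one_div_add_atTop_nhds_zero_nat.eventually_lt_const hε] with k hk t ht
  exact (hdist k t ht).trans hk

end LeftStep

/-- For every function `g : [a,b] → ℂ` of bounded variation, left-continuous on `(a,b)`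
and vanishing at `a`, there is a sequence of functions of the span `S` of indicators of
intervals `(c,b]` and of `{b}` that converges to `g` uniformly on `[a,b]` and has
uniformly bounded total variations. -/
theorem stmt_0 (a b : ℝ) (hab : a < b) (g : ℝ → ℂ)
    (hBV : eVariationOn g (Set.Icc a b) ≠ ⊤)
    (hleft : ∀ t ∈ Set.Ioo a b, ContinuousWithinAt g (Set.Ico a t) t)
    (hga : g a = 0) :
    ∃ G : ℕ → ℝ → ℂ,
      (∀ k, MemSpanS a b (G k)) ∧
      TendstoUniformlyOn (fun k t => G k t) g atTop (Set.Icc a b) ∧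
      ∃ M : ℝ, ∀ k, eVariationOn (G k) (Set.Icc a b) ≤ ENNReal.ofReal M := by
  obtain ⟨G, hG, hlim, hvar⟩ := stmt_0_general hab.le hBV hleft hga
  exact ⟨G, fun k => memSpanS_of_mem_leftStepFunctions (hG k), hlim,
    (eVariationOn g (Icc a b)).toReal, fun k => (hvar k).trans_eq (ENNReal.ofReal_toReal hBV).symm⟩
end

section
/- Let a < b be real numbers and let g : [a,b] → ℝ be monotone nondecreasing, left-continuous at every point of (a,b), and satisfy g(a) = 0. Then there exists a sequence (g_k)_{k≥1} of monotone nondecreasing functions g_k : [a,b] → ℝ, each a finite linear combination with nonnegative real coefficients of indicator functions of intervals (c,b] (a ≤ c ≤ b) and of {b}, such that sup_{t ∈ [a,b]} |g_k(t) − g(t)| → 0 as k → ∞ and sup_{k≥1} V(g_k,[a,b]) < ∞. -/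
/-!
Rounding the values of `g` up to the grid `εℕ` gives `ε * ⌈g t / ε⌉₊`, which is within `ε` of `g t`
and is `ε` times the number of levels `ε * j` lying strictly below `g t`. It is therefore a sum of
multiples of indicators of superlevel sets of `g`, and monotonicity together with left-continuity
forces each superlevel set to be of the form `(τ, b]` or `{b}`.
-/

open Filter Set

/-- `f` is a finite linear combination with nonnegative real coefficients of indicator
functions of intervals `(c, b]` with `a ≤ c ≤ b` and of the singleton `{b}`. -/
def IsNonnegStepComb (a b : ℝ) (f : ℝ → ℝ) : Prop :=
  ∃ (p : ℕ) (c : Fin p → ℝ) (τ : Fin p → ℝ) (d : ℝ),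
    (∀ j, 0 ≤ c j) ∧ (∀ j, τ j ∈ Set.Icc a b) ∧ 0 ≤ d ∧
    ∀ x, f x = (∑ j, c j * Set.indicator (Set.Ioc (τ j) b) (fun _ => (1 : ℝ)) x)
      + d * Set.indicator {b} (fun _ => (1 : ℝ)) x

section Superlevel

variable {α β : Type*} [TopologicalSpace α] [TopologicalSpace β]

lemma le_of_isLUB_sublevel [LinearOrder α] [OrderTopology α] [Preorder β] [ClosedIicTopology β]
    {f : α → β} {a b τ : α} {y : β}
    (hf : ContinuousWithinAt f (Ico a τ) τ) (hne : {t ∈ Icc a b | f t ≤ y}.Nonempty)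
    (hτ : IsLUB {t ∈ Icc a b | f t ≤ y} τ) : f τ ≤ y := by
  by_contra hy
  have hsub : {t ∈ Icc a b | f t ≤ y} ⊆ Ico a τ := fun t ht =>
    ⟨ht.1.1, (hτ.1 ht).lt_of_ne fun h => hy (h ▸ ht.2)⟩
  have := hτ.nhdsWithin_neBot hne
  exact hy (le_of_tendsto (hf.mono hsub) (eventually_mem_nhdsWithin.mono fun _ ht => ht.2))

/-- An empty superlevel set is the interval `Ioc b b`. -/
lemma exists_superlevel_eq_Ioc_or_eq_singleton_s4 [ConditionallyCompleteLinearOrder α]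
    [OrderTopology α] [LinearOrder β] [ClosedIicTopology β] {f : α → β} {a b : α} {y : β}
    (hab : a ≤ b) (hmono : MonotoneOn f (Icc a b))
    (hleft : ∀ t ∈ Ioo a b, ContinuousWithinAt f (Ico a t) t) (hy : f a ≤ y) :
    ∃ τ ∈ Icc a b, {t ∈ Icc a b | y < f t} = Ioc τ b ∨ {t ∈ Icc a b | y < f t} = {b} := by
  set S := {t ∈ Icc a b | f t ≤ y}
  have haS : a ∈ S := ⟨left_mem_Icc.2 hab, hy⟩
  have hlub : IsLUB S (sSup S) := isLUB_csSup ⟨a, haS⟩ ⟨b, fun t ht => ht.1.2⟩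
  have hτ : sSup S ∈ Icc a b := ⟨hlub.1 haS, hlub.2 fun t ht => ht.1.2⟩
  have lt_of_sSup_lt : ∀ t ∈ Icc a b, sSup S < t → y < f t := fun t ht hlt =>
    not_le.1 fun hle => hlt.not_ge (hlub.1 ⟨ht, hle⟩)
  refine ⟨sSup S, hτ, ?_⟩
  by_cases hyτ : f (sSup S) ≤ y
  · left
    ext t
    refine ⟨fun ⟨ht, hyt⟩ => ⟨?_, ht.2⟩, fun ht => ?_⟩
    · exact not_le.1 fun hle => hyt.not_ge ((hmono ht hτ hle).trans hyτ)
    · have htI : t ∈ Icc a b := ⟨hτ.1.trans ht.1.le, ht.2⟩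
      exact ⟨htI, lt_of_sSup_lt t htI ht.1⟩
  · right
    have haτ : a < sSup S := hτ.1.lt_of_ne fun h => hyτ (h ▸ hy)
    have hτb : sSup S = b := hτ.2.eq_of_not_lt fun hlt =>
      hyτ (le_of_isLUB_sublevel (hleft _ ⟨haτ, hlt⟩) ⟨a, haS⟩ hlub)
    ext t
    refine ⟨fun ⟨ht, hyt⟩ => ht.2.eq_of_not_lt fun hlt => ?_, ?_⟩
    · obtain ⟨s, hs, hts⟩ := exists_lt_of_lt_csSup ⟨a, haS⟩ (hτb.symm ▸ hlt)
      exact hyt.not_ge ((hmono ht hs.1 hts.le).trans hs.2)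
    · rintro rfl
      exact ⟨right_mem_Icc.2 hab, hτb ▸ not_le.1 hyτ⟩

end Superlevel

lemma monotoneOn_indicator_const {α M : Type*} [Preorder α] [Preorder M] [Zero M] {s t : Set α}
    {r : M} (hr : 0 ≤ r) (hs : ∀ x ∈ s, ∀ y ∈ t, x ≤ y → y ∈ s) :
    MonotoneOn (s.indicator fun _ => r) t := by
  intro x _ y hy hxy
  by_cases hx : x ∈ s
  · rw [indicator_of_mem hx, indicator_of_mem (hs x hx y hy hxy)]
  · rw [indicator_of_notMem hx]
    exact indicator_nonneg (fun _ _ => hr) y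

namespace IsNonnegStepComb

variable {a b : ℝ} {f g : ℝ → ℝ}

lemma zero : IsNonnegStepComb a b 0 :=
  ⟨0, Fin.elim0, Fin.elim0, 0, fun j => j.elim0, fun j => j.elim0, le_rfl, fun x => by simp⟩

lemma indicator_Ioc {τ : ℝ} (hτ : τ ∈ Icc a b) : IsNonnegStepComb a b ((Ioc τ b).indicator 1) :=
  ⟨1, fun _ => 1, fun _ => τ, 0, fun _ => zero_le_one, fun _ => hτ, le_rfl, fun x => by
    simp [indicator_apply]⟩

lemma indicator_singleton : IsNonnegStepComb a b (({b} : Set ℝ).indicator 1) :=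
  ⟨0, Fin.elim0, Fin.elim0, 1, fun j => j.elim0, fun j => j.elim0, zero_le_one, fun x => by
    simp [indicator_apply]⟩

lemma add (hf : IsNonnegStepComb a b f) (hg : IsNonnegStepComb a b g) :
    IsNonnegStepComb a b (f + g) := by
  obtain ⟨p, c, τ, d, hc, hτ, hd, hf⟩ := hf
  obtain ⟨q, c', τ', d', hc', hτ', hd', hg⟩ := hg
  refine ⟨p + q, Fin.append c c', Fin.append τ τ', d + d', ?_, ?_, add_nonneg hd hd', fun x => ?_⟩
  · simpa [Fin.forall_fin_add] using ⟨hc, hc'⟩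
  · simpa only [Fin.forall_fin_add, Fin.append_left, Fin.append_right] using ⟨hτ, hτ'⟩
  · simp only [Pi.add_apply, hf, hg, Fin.sum_univ_add, Fin.append_left, Fin.append_right]
    ring

lemma sum {ι : Type*} {s : Finset ι} {F : ι → ℝ → ℝ} (hF : ∀ i ∈ s, IsNonnegStepComb a b (F i)) :
    IsNonnegStepComb a b (∑ i ∈ s, F i) :=
  Finset.sum_induction F (IsNonnegStepComb a b) (fun _ _ => add) zero hF

lemma smul {r : ℝ} (hr : 0 ≤ r) (hf : IsNonnegStepComb a b f) : IsNonnegStepComb a b (r • f) := by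
  obtain ⟨p, c, τ, d, hc, hτ, hd, hf⟩ := hf
  refine ⟨p, r • c, τ, r * d, fun j => mul_nonneg hr (hc j), hτ, mul_nonneg hr hd, fun x => ?_⟩
  simp only [Pi.smul_apply, smul_eq_mul, hf, mul_add, Finset.mul_sum, mul_assoc]

lemma monotoneOn (hf : IsNonnegStepComb a b f) : MonotoneOn f (Iic b) := by
  obtain ⟨p, c, τ, d, hc, -, hd, hf⟩ := hf
  have hIoc (σ : ℝ) : MonotoneOn ((Ioc σ b).indicator fun _ => (1 : ℝ)) (Iic b) :=
    monotoneOn_indicator_const zero_le_one fun u hu v hv huv => ⟨hu.1.trans_le huv, hv⟩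
  have hsingleton : MonotoneOn (({b} : Set ℝ).indicator fun _ => (1 : ℝ)) (Iic b) :=
    monotoneOn_indicator_const zero_le_one fun u hu v hv huv => le_antisymm hv (hu ▸ huv)
  intro x hx y hy hxy
  rw [hf, hf]
  gcongr with j
  · exact hc j
  · exact hIoc (τ j) hx hy hxy
  · exact hsingleton hx hy hxy

end IsNonnegStepComb

lemma exists_isNonnegStepComb_eqOn_indicator_superlevel {a b y : ℝ} {g : ℝ → ℝ} (hab : a ≤ b)
    (hmono : MonotoneOn g (Icc a b)) (hleft : ∀ t ∈ Ioo a b, ContinuousWithinAt g (Ico a t) t)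
    (hy : g a ≤ y) :
    ∃ s, IsNonnegStepComb a b s ∧ EqOn s ({t | y < g t}.indicator 1) (Icc a b) := by
  refine ⟨{t ∈ Icc a b | y < g t}.indicator 1, ?_, fun t ht => by
    simp [indicator_apply, ht.1, ht.2]⟩
  obtain ⟨τ, hτ, h | h⟩ := exists_superlevel_eq_Ioc_or_eq_singleton_s4 hab hmono hleft hy <;> rw [h]
  · exact .indicator_Ioc hτ
  · exact .indicator_singleton

lemma sum_range_ite_lt_eq_natCeil {R : Type*} [Semiring R] [LinearOrder R] [FloorSemiring R]
    {p : ℕ} {x : R} (hx : ⌈x⌉₊ ≤ p) :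
    ∑ j ∈ Finset.range p, (if (j : R) < x then (1 : R) else 0) = ⌈x⌉₊ := by
  have hfilter : {j ∈ Finset.range p | ((j : ℕ) : R) < x} = Finset.range ⌈x⌉₊ := by
    ext j
    simpa [← Nat.lt_ceil] using fun hj => hj.trans_le hx
  rw [Finset.sum_boole, hfilter, Finset.card_range]

lemma mul_natCeil_div_mem_Ico {R : Type*} [Field R] [LinearOrder R] [IsStrictOrderedRing R]
    [FloorSemiring R] {ε x : R} (hε : 0 < ε) (hx : 0 ≤ x) : ε * ⌈x / ε⌉₊ ∈ Ico x (x + ε) := by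
  constructor
  · exact (div_le_iff₀' hε).1 (Nat.le_ceil _)
  · calc ε * ⌈x / ε⌉₊ < ε * (x / ε + 1) := by gcongr; exact Nat.ceil_lt_add_one (by positivity)
      _ = x + ε := by field_simp

lemma exists_isNonnegStepComb_eqOn_mul_natCeil_div {a b ε : ℝ} {g : ℝ → ℝ} (hab : a ≤ b)
    (hmono : MonotoneOn g (Icc a b)) (hleft : ∀ t ∈ Ioo a b, ContinuousWithinAt g (Ico a t) t)
    (hga : g a ≤ 0) (hε : 0 < ε) :
    ∃ G, IsNonnegStepComb a b G ∧ EqOn G (fun t => ε * ⌈g t / ε⌉₊) (Icc a b) := by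
  have hlevel (j : ℕ) : g a ≤ ε * j := hga.trans (by positivity)
  choose s hs hs_eq using fun j : ℕ =>
    exists_isNonnegStepComb_eqOn_indicator_superlevel hab hmono hleft (hlevel j)
  refine ⟨ε • ∑ j ∈ Finset.range ⌈g b / ε⌉₊, s j, .smul hε.le (.sum fun j _ => hs j),
    fun t ht => ?_⟩
  have hs_apply (j : ℕ) : s j t = if (j : ℝ) < g t / ε then 1 else 0 := by
    simp [hs_eq j ht, indicator_apply, lt_div_iff₀' hε]
  have hceil : ⌈g t / ε⌉₊ ≤ ⌈g b / ε⌉₊ := by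
    gcongr
    exact hmono ht (right_mem_Icc.2 hab) ht.2
  simp only [Pi.smul_apply, smul_eq_mul, Finset.sum_apply, hs_apply,
    sum_range_ite_lt_eq_natCeil hceil]

lemma exists_isNonnegStepComb_mem_Ico {a b ε : ℝ} {g : ℝ → ℝ} (hab : a ≤ b)
    (hmono : MonotoneOn g (Icc a b)) (hleft : ∀ t ∈ Ioo a b, ContinuousWithinAt g (Ico a t) t)
    (hga : g a = 0) (hε : 0 < ε) :
    ∃ G, IsNonnegStepComb a b G ∧ ∀ t ∈ Icc a b, G t ∈ Ico (g t) (g t + ε) := by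
  obtain ⟨G, hG, hG_eq⟩ :=
    exists_isNonnegStepComb_eqOn_mul_natCeil_div hab hmono hleft hga.le hε
  refine ⟨G, hG, fun t ht => ?_⟩
  have hgt : 0 ≤ g t := hga ▸ hmono (left_mem_Icc.2 hab) ht ht.1
  exact hG_eq ht ▸ mul_natCeil_div_mem_Ico hε hgt

/-- Every monotone nondecreasing function `g : [a,b] → ℝ` that is left-continuous on
`(a,b)` and satisfies `g a = 0` is the uniform limit on `[a,b]` of a sequence of monotone
nondecreasing nonnegative step combinations with uniformly bounded total variations. -/
theorem stmt_4 (a b : ℝ) (hab : a < b) (g : ℝ → ℝ)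
    (hmono : MonotoneOn g (Set.Icc a b))
    (hleft : ∀ t ∈ Set.Ioo a b, ContinuousWithinAt g (Set.Ico a t) t)
    (hga : g a = 0) :
    ∃ G : ℕ → ℝ → ℝ,
      (∀ k, IsNonnegStepComb a b (G k) ∧ MonotoneOn (G k) (Set.Icc a b)) ∧
      TendstoUniformlyOn (fun k t => G k t) g atTop (Set.Icc a b) ∧
      ∃ M : ℝ, ∀ k, eVariationOn (G k) (Set.Icc a b) ≤ ENNReal.ofReal M := by
  have hε (k : ℕ) : (0 : ℝ) < 1 / (k + 1) := Nat.one_div_pos_of_nat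
  choose G hG hG_mem using fun k => exists_isNonnegStepComb_mem_Ico hab.le hmono hleft hga (hε k)
  have hG_mono (k : ℕ) : MonotoneOn (G k) (Icc a b) := (hG k).monotoneOn.mono Icc_subset_Iic_self
  have ha : a ∈ Icc a b := left_mem_Icc.2 hab.le
  have hb : b ∈ Icc a b := right_mem_Icc.2 hab.le
  refine ⟨G, fun k => ⟨hG k, hG_mono k⟩, ?_, g b + 1, fun k => ?_⟩
  · refine Metric.tendstoUniformlyOn_iff.2 fun δ hδ => ?_
    filter_upwards [tendsto_one_div_add_atTop_nhds_zero_nat.eventually_lt_const hδ] with k hk t ht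
    rw [dist_comm, Real.dist_eq, abs_of_nonneg (sub_nonneg.2 (hG_mem k t ht).1)]
    linarith [(hG_mem k t ht).2]
  · have hincrement : G k b - G k a ≤ g b + 1 := by
      have hε_le : 1 / ((k : ℝ) + 1) ≤ 1 := (div_le_one₀ (by positivity)).2 (by simp)
      linarith [(hG_mem k b hb).2, (hG_mem k a ha).1]
    calc eVariationOn (G k) (Icc a b) = ENNReal.ofReal (G k b - G k a) := by
          simpa only [inter_self] using (hG_mono k).eVariationOn_eq ha hb
      _ ≤ ENNReal.ofReal (g b + 1) := ENNReal.ofReal_le_ofReal hincrement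
end
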